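/- Every algebra S(0,0,0,b,0,d) (e²=f, f²=0, ef=bf, fe=df) is isomorphic to exactly one of the following: S(0,0,0,0,0,0), S(0,0,0,0,0,1), or S(0,0,0,1,0,λ) for some λ ∈ K. Specifically: if b=d=0 it equals S(0,0,0,0,0,0); if b=0, d≠0 it is isomorphic to S(0,0,0,0,0,1); and if b≠0 it is isomorphic to S(0,0,0,1,0,d/b). -/

import Mathlib

/-- The 2-dimensional algebra S(p,q,a,b,c,d) on K² with basis e = (1,0), f = (0,1) and
multiplication e² = f, f² = pe+qf, ef = ae+bf, fe = ce+df. -/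
def mulS {K : Type*} [Field K] (p q a b c d : K) (x y : K × K) : K × K :=
  (x.1*y.2*a + x.2*y.1*c + x.2*y.2*p,
   x.1*y.1 + x.1*y.2*b + x.2*y.1*d + x.2*y.2*q)

/-- Endo-commutativity: (xy)² = x²y² for all x, y. -/
def IsEC {K : Type*} [Field K] (m : K × K → K × K → K × K) : Prop :=
  ∀ x y : K × K, m (m x y) (m x y) = m (m x x) (m y y)

/-- Two multiplications on K² give isomorphic algebras iff there is a bijective
K-linear map preserving multiplication. -/
def AlgIso {K : Type*} [Field K] (m₁ m₂ : K × K → K × K → K × K) : Prop :=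
  ∃ φ : (K × K) ≃ₗ[K] (K × K), ∀ u v : K × K, φ (m₁ u v) = m₂ (φ u) (φ v)

theorem algIso_iff {K : Type*} [Field K] (b d b' d' : K) :
    AlgIso (mulS (0:K) 0 0 b 0 d) (mulS 0 0 0 b' 0 d') ↔
      ∃ x : K, x ≠ 0 ∧ b = x * b' ∧ d = x * d' := by
  constructor
  · rintro ⟨φ, h⟩
    have h1 := h (1, 0) (1, 0)
    have h2 := h (1, 0) (0, 1)
    have h3 := h (0, 1) (1, 0)
    have e2 : ((0 : K), b) = b • ((0 : K), (1 : K)) := by simp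
    have e3 : ((0 : K), d) = d • ((0 : K), (1 : K)) := by simp
    have hne : φ (0, 1) ≠ 0 := by simp
    simp only [mulS, mul_zero, zero_mul, add_zero, zero_add, mul_one, one_mul] at h1 h2 h3
    rw [e2, map_smul] at h2
    rw [e3, map_smul] at h3
    have f1 : (φ (0, 1)).1 = 0 := by rw [h1]
    have f2 : (φ (0, 1)).2 ≠ 0 := fun h0 => hne (Prod.ext f1 h0)
    have g2 := congrArg Prod.snd h2
    have g3 := congrArg Prod.snd h3
    simp only [Prod.smul_snd, smul_eq_mul, f1, mul_zero, zero_mul, add_zero, zero_add] at g2 g3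
    refine ⟨(φ (1, 0)).1, ?_, ?_, ?_⟩
    · intro h0
      have hs : φ ((φ (0, 1)).2 • (1, 0) - (φ (1, 0)).2 • (0, 1)) = 0 := by
        rw [map_sub, map_smul, map_smul]
        ext
        · simp [h0, f1]
        · simp [mul_comm]
      rw [LinearEquiv.map_eq_zero_iff] at hs
      have := congrArg Prod.fst hs
      simp at this
      exact f2 this
    · apply mul_right_cancel₀ f2
      linear_combination g2
    · apply mul_right_cancel₀ f2
      linear_combination g3
  · rintro ⟨x, hx, rfl, rfl⟩
    refine ⟨(LinearEquiv.smulOfNeZero K K x hx).prodCongr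
      (LinearEquiv.smulOfNeZero K K (x * x) (mul_ne_zero hx hx)), ?_⟩
    rintro ⟨u1, u2⟩ ⟨v1, v2⟩
    ext
    · simp [mulS]
    · simp [mulS]
      ring

/-- Every S(0,0,0,b,0,d) is isomorphic to exactly one of S(0,0,0,0,0,0), S(0,0,0,0,0,1),
S(0,0,0,1,0,λ); specifically it equals S(0,0,0,0,0,0) if b = d = 0, is isomorphic to
S(0,0,0,0,0,1) if b = 0 and d ≠ 0, and to S(0,0,0,1,0,d/b) if b ≠ 0. -/
theorem stmt9 {K : Type*} [Field K] (b d : K) :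
    ((b = 0 ∧ d = 0) → mulS (0:K) 0 0 b 0 d = mulS 0 0 0 0 0 0) ∧
    ((b = 0 ∧ d ≠ 0) → AlgIso (mulS (0:K) 0 0 b 0 d) (mulS 0 0 0 0 0 1)) ∧
    (b ≠ 0 → AlgIso (mulS (0:K) 0 0 b 0 d) (mulS 0 0 0 1 0 (d/b))) ∧
    (AlgIso (mulS (0:K) 0 0 b 0 d) (mulS 0 0 0 0 0 0) ∨
     AlgIso (mulS (0:K) 0 0 b 0 d) (mulS 0 0 0 0 0 1) ∨
     ∃ l : K, AlgIso (mulS (0:K) 0 0 b 0 d) (mulS 0 0 0 1 0 l)) ∧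
    ¬(AlgIso (mulS (0:K) 0 0 b 0 d) (mulS 0 0 0 0 0 0) ∧
      AlgIso (mulS (0:K) 0 0 b 0 d) (mulS 0 0 0 0 0 1)) ∧
    (∀ l : K, ¬(AlgIso (mulS (0:K) 0 0 b 0 d) (mulS 0 0 0 0 0 0) ∧
      AlgIso (mulS (0:K) 0 0 b 0 d) (mulS 0 0 0 1 0 l))) ∧
    (∀ l : K, ¬(AlgIso (mulS (0:K) 0 0 b 0 d) (mulS 0 0 0 0 0 1) ∧
      AlgIso (mulS (0:K) 0 0 b 0 d) (mulS 0 0 0 1 0 l))) ∧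
    (∀ l l' : K, l ≠ l' → ¬(AlgIso (mulS (0:K) 0 0 b 0 d) (mulS 0 0 0 1 0 l) ∧
      AlgIso (mulS (0:K) 0 0 b 0 d) (mulS 0 0 0 1 0 l'))) := by
  simp only [algIso_iff]
  refine ⟨?_, ?_, ?_, ?_, ?_, ?_, ?_, ?_⟩
  · rintro ⟨rfl, rfl⟩
    rfl
  · rintro ⟨rfl, hd⟩
    exact ⟨d, hd, by simp, by simp⟩
  · intro hb
    exact ⟨b, hb, by simp, by field_simp⟩
  · by_cases hb : b = 0
    · by_cases hd : d = 0
      · exact Or.inl ⟨1, one_ne_zero, by simp [hb], by simp [hd]⟩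
      · exact Or.inr (Or.inl ⟨d, hd, by simp [hb], by simp⟩)
    · exact Or.inr (Or.inr ⟨d / b, b, hb, by simp, by field_simp⟩)
  · rintro ⟨⟨x, hx, h1, h2⟩, y, hy, h3, h4⟩
    simp_all
  · rintro l ⟨⟨x, hx, h1, h2⟩, y, hy, h3, h4⟩
    simp_all
  · rintro l ⟨⟨x, hx, h1, h2⟩, y, hy, h3, h4⟩
    simp_all
  · rintro l l' hl ⟨⟨x, hx, h1, h2⟩, y, hy, h3, h4⟩
    rw [mul_one] at h1 h3
    subst h1
    subst h3
    exact hl (mul_left_cancel₀ hx (h2.symm.trans h4))
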